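/- Let 1/2 < p < 1 be real. Define, for N ≥ 1, E_N(p) = B_N^{−1} · Σ_{k=0}^{N−1} v_{N,k} · Γ(2k+1+p)/(2k)!, where B_N = binom(2N,N), C_k = binom(2k,k)/(k+1), and v_{N,k} = C_k · (4^{N−k−1} + ((N−k)/2) · B_{N−k}). Then the limit as N → ∞ of (E_N(p) − (2^p Γ(p−1/2)/(4 Γ(p+1))) · N^{1/2+p}) / N equals Γ(1/2 − p) · Γ(p+1) / (2^p · √π · Γ(2 − p)). -/

import Mathlib

/-- `v N k = C_k (4^(N-k-1) + ((N-k)/2) B_{N-k})`. -/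
noncomputable def dyckEdgeCount (N k : ℕ) : ℝ :=
  (catalan k : ℝ) *
    (4 ^ (N - k - 1) + ((N : ℝ) - (k : ℝ)) / 2 * (Nat.choose (2 * (N - k)) (N - k) : ℝ))

/-- Average cost of the Dyck matching in the exponential-spacings model. -/
noncomputable def dyckCostES (p : ℝ) (N : ℕ) : ℝ :=
  ((Nat.choose (2 * N) N : ℝ))⁻¹ *
    ∑ k ∈ Finset.range N,
      dyckEdgeCount N k * Real.Gamma (2 * (k : ℝ) + 1 + p) / ((2 * k).factorial : ℝ)

/-!
The factor of `v_{N,k}` that depends on `j = N - k - 1` is, up to a power of `4`, the coefficient of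
`t ^ j` in `(1 - t) ^ (-1) + (1 - t) ^ (-3 / 2)`, and `C_k Γ(2k + 1 + p) / (2k)!` is, again up to a
power of `4`, proportional to the `k`-th term `T_k` of `₂F₁((1 + p) / 2, 1 + p / 2; 2; 1)`. So the
cost is a convolution of `T` with binomial coefficients. The terms `T_k` decay only like
`k ^ (p - 3 / 2)`, as the coefficients of `(1 - t) ^ (1 / 2 - p)` do. Subtract the multiple of these
coefficients with the same leading asymptotics: by Vandermonde it convolves to a single binomial
coefficient, which gives the term of order `N ^ (1 / 2 + p)`. What remains of `T` is summable, so by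
dominated convergence it contributes its sum times `N`. The contiguous relation `c ↦ c + 1` reduces
this sum to a convergent Gauss series, so its value continues Gauss's formula analytically.
-/

open Filter Topology Asymptotics Finset Ring

section Algebra

theorem sum_antidiagonal_multichoose_mul {R : Type*} [CommRing R] [BinomialRing R] (x y : R)
    (n : ℕ) :
    ∑ ij ∈ antidiagonal n, multichoose x ij.1 * multichoose y ij.2 = multichoose (x + y) n := by
  have vandermonde := add_choose_eq n (Commute.all (-x) (-y))
  simp only [← neg_add, choose_neg', smul_mul_smul_comm] at vandermonde
  rw [sum_congr rfl fun ij hij => by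
    rw [← Int.negOnePow_add, ← Nat.cast_add, mem_antidiagonal.1 hij], ← smul_sum] at vandermonde
  exact (MulAction.injective _ vandermonde).symm

variable {K : Type*} [Field K] [CharZero K] [BinomialRing K]

theorem multichoose_eq_ascPochhammer_div_factorial (x : K) (n : ℕ) :
    multichoose x n = (ascPochhammer K n).eval x / n.factorial := by
  rw [eq_div_iff (Nat.cast_ne_zero.2 n.factorial_ne_zero), mul_comm, ← nsmul_eq_mul,
    factorial_nsmul_multichoose_eq_ascPochhammer, Polynomial.ascPochhammer_smeval_eq_eval]

theorem succ_mul_multichoose_succ (x : K) (n : ℕ) :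
    (n + 1) * multichoose x (n + 1) = (x + n) * multichoose x n := by
  have hn : (n + 1 : K) ≠ 0 := n.cast_add_one_ne_zero
  simp only [multichoose_eq_ascPochhammer_div_factorial, ascPochhammer_succ_eval,
    Nat.factorial_succ, Nat.cast_mul, Nat.cast_add_one]
  field_simp

theorem mul_multichoose_add_one (x : K) (n : ℕ) :
    x * multichoose (x + 1) n = (x + n) * multichoose x n := by
  have hn : (n + 1 : K) ≠ 0 := n.cast_add_one_ne_zero
  rw [← succ_mul_multichoose_succ]
  simp only [multichoose_eq_ascPochhammer_div_factorial, ascPochhammer_succ_left,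
    Nat.factorial_succ, Nat.cast_mul, Nat.cast_add_one, Polynomial.eval_mul, Polynomial.eval_X,
    Polynomial.eval_comp, Polynomial.eval_add, Polynomial.eval_one]
  field_simp

theorem multichoose_ne_zero {x : K} (hx : ∀ m : ℕ, x ≠ -m) (n : ℕ) : multichoose x n ≠ 0 := by
  rw [multichoose_eq_ascPochhammer_div_factorial, div_ne_zero_iff, Ne,
    ascPochhammer_eval_eq_zero_iff]
  exact ⟨fun ⟨m, _, hm⟩ => hx m (by rw [hm, neg_neg]), Nat.cast_ne_zero.2 n.factorial_ne_zero⟩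

theorem mul_sum_range_multichoose (x : K) (n : ℕ) :
    x * ∑ k ∈ range n, multichoose x k = n * multichoose x n := by
  induction n with
  | zero => simp
  | succ n ih =>
    rw [sum_range_succ, mul_add, ih, Nat.cast_add_one, succ_mul_multichoose_succ]
    ring

theorem ordinaryHypergeometricCoefficient_eq_multichoose (a b c : K) (n : ℕ) :
    ordinaryHypergeometricCoefficient a b c n =
      multichoose a n * multichoose b n / multichoose c n := by
  have hn : (n.factorial : K) ≠ 0 := Nat.cast_ne_zero.2 n.factorial_ne_zero
  simp only [ordinaryHypergeometricCoefficient, multichoose_eq_ascPochhammer_div_factorial]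
  field_simp

theorem ordinaryHypergeometricCoefficient_add_one_right (a b : K) {c : K}
    (hc : ∀ m : ℕ, c ≠ -m) (n : ℕ) :
    (c + n) * ordinaryHypergeometricCoefficient a b (c + 1) n =
      c * ordinaryHypergeometricCoefficient a b c n := by
  have hcn : c + n ≠ 0 := fun h => hc n (eq_neg_of_add_eq_zero_left h)
  have hu := multichoose_ne_zero hc n
  have hu' : multichoose (c + 1) n ≠ 0 := right_ne_zero_of_mul
    (mul_multichoose_add_one c n ▸ mul_ne_zero hcn hu)
  simp only [ordinaryHypergeometricCoefficient_eq_multichoose]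
  field_simp
  linear_combination -(multichoose a n * multichoose b n) * mul_multichoose_add_one c n

theorem ordinaryHypergeometricCoefficient_succ (a b : K) {c : K} (hc : ∀ m : ℕ, c ≠ -m) (n : ℕ) :
    (n + 1) * (c + n) * ordinaryHypergeometricCoefficient a b c (n + 1) =
      (a + n) * (b + n) * ordinaryHypergeometricCoefficient a b c n := by
  have hu := multichoose_ne_zero hc n
  have hu' := multichoose_ne_zero hc (n + 1)
  simp only [ordinaryHypergeometricCoefficient_eq_multichoose]
  have ha := succ_mul_multichoose_succ a n
  have hb := succ_mul_multichoose_succ b n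
  have hc' := succ_mul_multichoose_succ c n
  field_simp
  linear_combination multichoose c (n + 1) * ((n + 1) * multichoose b (n + 1) * ha +
    (a + n) * multichoose a n * hb) - (n + 1) * multichoose a (n + 1) * multichoose b (n + 1) * hc'

theorem contiguous_sum_range_ordinaryHypergeometricCoefficient (a b : K) {c : K}
    (hc : ∀ m : ℕ, c ≠ -m) (n : ℕ) :
    (c - a - b) * ∑ k ∈ range n, ordinaryHypergeometricCoefficient a b c k =
      (c - a) * (c - b) / c * (∑ k ∈ range n, ordinaryHypergeometricCoefficient a b (c + 1) k) -
        n * ordinaryHypergeometricCoefficient a b c n := by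
  have hc0 : c ≠ 0 := by simpa using hc 0
  induction n with
  | zero => simp
  | succ n ih =>
    have hcn : c + n ≠ 0 := fun h => hc n (eq_neg_of_add_eq_zero_left h)
    have hshift := ordinaryHypergeometricCoefficient_add_one_right a b hc n
    have hsucc := ordinaryHypergeometricCoefficient_succ a b hc n
    rw [sum_range_succ, sum_range_succ, mul_add, mul_add, ih, Nat.cast_add_one]
    generalize ordinaryHypergeometricCoefficient a b c (n + 1) = t₁ at *
    generalize ordinaryHypergeometricCoefficient a b c n = t at *
    generalize ordinaryHypergeometricCoefficient a b (c + 1) n = t' at *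
    have hn : (n + 1 : K) ≠ 0 := n.cast_add_one_ne_zero
    rw [mul_comm, ← eq_div_iff hcn] at hshift
    have hsucc' : (n + 1) * t₁ = (a + n) * (b + n) * t / (c + n) := by
      rw [eq_div_iff hcn, ← hsucc]
      ring
    rw [hshift, hsucc']
    field_simp
    ring

end Algebra

section IsBigO

variable {α : Type*} {l : Filter α} {f f' h : α → ℝ} {m m' : ℝ}

theorem isBigO_mul_sub_mul (hh : h =O[l] fun _ => (1 : ℝ)) (hf : (fun n => f n - m) =O[l] h)
    (hf' : (fun n => f' n - m') =O[l] h) : (fun n => f n * f' n - m * m') =O[l] h := by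
  have hprod : (fun n => (f n - m) * (f' n - m')) =O[l] h := by
    simpa only [mul_one] using hf.mul (hf'.trans hh)
  refine ((hprod.add (hf'.const_mul_left m)).add (hf.const_mul_left m')).congr_left fun n => ?_
  ring

theorem isBigO_inv_sub_inv (hh : Tendsto h l (𝓝 0)) (hf : (fun n => f n - m) =O[l] h)
    (hm : m ≠ 0) : (fun n => (f n)⁻¹ - m⁻¹) =O[l] h := by
  have hlim : Tendsto f l (𝓝 m) := tendsto_sub_nhds_zero_iff.1 (hf.trans_tendsto hh)
  have hinv : (fun n => -((f n)⁻¹ * m⁻¹)) =O[l] fun _ => (1 : ℝ) :=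
    ((hlim.inv₀ hm).mul_const m⁻¹).neg.isBigO_one ℝ
  refine (hf.mul hinv).congr' ?_ (Eventually.of_forall fun n => mul_one _)
  filter_upwards [hlim.eventually_ne hm] with n hn
  field_simp
  ring

end IsBigO

section Gamma

theorem ne_neg_natCast_of_pos {x : ℝ} (hx : 0 < x) (m : ℕ) : x ≠ -m :=
  fun h => by linarith [m.cast_nonneg (α := ℝ)]

theorem add_natCast_ne_neg_natCast {x : ℝ} (hx : ∀ m : ℕ, x ≠ -m) (n m : ℕ) :
    x + n ≠ -m := fun h => hx (m + n) (by push_cast; linarith)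

theorem inv_Gamma_eq_mul_inv_Gamma_add_one (x : ℝ) :
    (Real.Gamma x)⁻¹ = x * (Real.Gamma (x + 1))⁻¹ := by
  rcases eq_or_ne x 0 with rfl | hx
  · simp
  · rw [Real.Gamma_add_one hx]
    field_simp

theorem Gamma_add_natCast {x : ℝ} (hx : ∀ m : ℕ, x ≠ -m) (n : ℕ) :
    Real.Gamma (x + n) = (ascPochhammer ℝ n).eval x * Real.Gamma x := by
  induction n with
  | zero => simp
  | succ n ih =>
    rw [Nat.cast_add_one, ← add_assoc, Real.Gamma_add_one fun h => hx n (by linarith), ih,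
      ascPochhammer_succ_eval]
    ring

theorem Gamma_add_le_rpow_mul_Gamma {x y : ℝ} (hx : 0 < x) (hy₀ : 0 ≤ y) (hy₁ : y ≤ 1) :
    Real.Gamma (x + y) ≤ x ^ y * Real.Gamma x := by
  rcases hy₀.eq_or_lt with rfl | hy₀
  · simp
  rcases hy₁.eq_or_lt with rfl | hy₁
  · rw [Real.Gamma_add_one hx.ne', Real.rpow_one]
  have hΓ := Real.Gamma_pos_of_pos hx
  have convex := Real.Gamma_mul_add_mul_le_rpow_Gamma_mul_rpow_Gamma (add_pos hx one_pos) hx hy₀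
    (sub_pos.2 hy₁) (add_sub_cancel y 1)
  rw [show y * (x + 1) + (1 - y) * x = x + y by ring, Real.Gamma_add_one hx.ne',
    Real.mul_rpow hx.le hΓ.le, mul_assoc, ← Real.rpow_add hΓ] at convex
  simpa using convex

theorem mul_rpow_mul_Gamma_le_add_mul_Gamma_add {x y : ℝ} (hx : 0 < x) (hy₀ : 0 ≤ y)
    (hy₁ : y ≤ 1) : x * (x ^ y * Real.Gamma x) ≤ (x + y) * Real.Gamma (x + y) := by
  have hxy : 0 < x + y := by positivity
  have upper := Gamma_add_le_rpow_mul_Gamma hxy (sub_nonneg.2 hy₁) (sub_le_self 1 hy₀)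
  rw [show x + y + (1 - y) = x + 1 by ring, Real.Gamma_add_one hx.ne'] at upper
  calc x * (x ^ y * Real.Gamma x) = x ^ y * (x * Real.Gamma x) := by ring
    _ ≤ (x + y) ^ y * ((x + y) ^ (1 - y) * Real.Gamma (x + y)) := by
      gcongr
      exact le_add_of_nonneg_right hy₀
    _ = (x + y) * Real.Gamma (x + y) := by
      rw [← mul_assoc, ← Real.rpow_add hxy, add_sub_cancel, Real.rpow_one]

end Gamma

section MultichooseAsymptotics

/-- The normalization `binom (x + n - 1) n * (n + 1) ^ (1 - x)` of the coefficient of `t ^ n` in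
`(1 - t) ^ (-x)`, which converges to `1 / Γ x`. -/
noncomputable def normalizedMultichoose (x : ℝ) (n : ℕ) : ℝ :=
  multichoose x n * ((n : ℝ) + 1) ^ (1 - x)

theorem multichoose_eq_normalizedMultichoose_mul (x : ℝ) (n : ℕ) :
    multichoose x n = normalizedMultichoose x n * ((n : ℝ) + 1) ^ (x - 1) := by
  rw [normalizedMultichoose, mul_assoc, ← Real.rpow_add n.cast_add_one_pos]
  simp

theorem mul_normalizedMultichoose_add_one (x : ℝ) (n : ℕ) :
    x * normalizedMultichoose (x + 1) n =
      (1 + (x - 1) * ((n : ℝ) + 1)⁻¹) * normalizedMultichoose x n := by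
  have hn : (0 : ℝ) < n + 1 := n.cast_add_one_pos
  rw [normalizedMultichoose, normalizedMultichoose, ← mul_assoc, mul_multichoose_add_one,
    show 1 - (x + 1) = 1 - x - 1 by ring, Real.rpow_sub_one hn.ne']
  field_simp
  ring

theorem tendsto_inv_natCast_add_one : Tendsto (fun n : ℕ => ((n : ℝ) + 1)⁻¹) atTop (𝓝 0) := by
  simpa only [one_div] using tendsto_one_div_add_atTop_nhds_zero_nat (𝕜 := ℝ)

theorem normalizedMultichoose_eq_Gamma {x : ℝ} (hx : ∀ m : ℕ, x ≠ -m) (n : ℕ) :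
    normalizedMultichoose x n = (Real.Gamma x)⁻¹ *
      (Real.Gamma (n + 1 + (x - 1)) / (((n : ℝ) + 1) ^ (x - 1) * Real.Gamma (n + 1))) := by
  have hΓ := Real.Gamma_ne_zero hx
  rw [normalizedMultichoose, multichoose_eq_ascPochhammer_div_factorial,
    show (n : ℝ) + 1 + (x - 1) = x + n by ring, Gamma_add_natCast hx, Real.Gamma_nat_eq_factorial,
    ← neg_sub x 1, Real.rpow_neg n.cast_add_one_pos.le]
  field_simp

theorem isBigO_normalizedMultichoose_sub_of_mem_Ico {x : ℝ} (hx : x ∈ Set.Ico 1 2) :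
    (fun n => normalizedMultichoose x n - (Real.Gamma x)⁻¹) =O[atTop]
      fun n : ℕ => ((n : ℝ) + 1)⁻¹ := by
  have hy₀ : 0 ≤ x - 1 := sub_nonneg.2 hx.1
  have hy₁ : x - 1 ≤ 1 := by linarith [hx.2]
  refine IsBigO.of_bound |(Real.Gamma x)⁻¹| (Eventually.of_forall fun n => ?_)
  have hN : (0 : ℝ) < n + 1 := n.cast_add_one_pos
  have hD := mul_pos (Real.rpow_pos_of_pos hN (x - 1)) (Real.Gamma_pos_of_pos hN)
  have upper := Gamma_add_le_rpow_mul_Gamma hN hy₀ hy₁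
  have lower := mul_rpow_mul_Gamma_le_add_mul_Gamma_add hN hy₀ hy₁
  rw [normalizedMultichoose_eq_Gamma (ne_neg_natCast_of_pos (by linarith [hx.1])),
    ← mul_sub_one,
    norm_mul, Real.norm_eq_abs, norm_inv, Real.norm_of_nonneg hN.le]
  generalize ((n : ℝ) + 1) ^ (x - 1) * Real.Gamma (n + 1) = D at *
  gcongr
  rw [div_sub_one hD.ne', Real.norm_eq_abs, abs_div, abs_of_pos hD,
    abs_of_nonpos (sub_nonpos.2 upper), inv_eq_one_div, div_le_div_iff₀ hD hN]
  have hΓ := Real.Gamma_pos_of_pos (add_pos_of_pos_of_nonneg hN hy₀)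
  linarith [mul_le_mul_of_nonneg_right hy₁ hΓ.le]

theorem isBigO_normalizedMultichoose_sub_add_one_iff (x : ℝ) :
    ((fun n => normalizedMultichoose (x + 1) n - (Real.Gamma (x + 1))⁻¹) =O[atTop]
      fun n : ℕ => ((n : ℝ) + 1)⁻¹) ↔
    (fun n => normalizedMultichoose x n - (Real.Gamma x)⁻¹) =O[atTop]
      fun n : ℕ => ((n : ℝ) + 1)⁻¹ := by
  have hbdd := tendsto_inv_natCast_add_one.isBigO_one ℝ
  have hfactor : (fun n : ℕ => 1 + (x - 1) * ((n : ℝ) + 1)⁻¹ - 1) =O[atTop]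
      fun n : ℕ => ((n : ℝ) + 1)⁻¹ := by
    simpa only [add_sub_cancel_left] using (isBigO_refl _ _).const_mul_left (x - 1)
  constructor <;> intro h
  · have hinv := isBigO_inv_sub_inv tendsto_inv_natCast_add_one hfactor one_ne_zero
    have hne : ∀ᶠ n : ℕ in atTop, 1 + (x - 1) * ((n : ℝ) + 1)⁻¹ ≠ 0 :=
      (tendsto_sub_nhds_zero_iff.1
        (hfactor.trans_tendsto tendsto_inv_natCast_add_one)).eventually_ne one_ne_zero
    refine ((isBigO_mul_sub_mul hbdd hinv h).const_mul_left x).congr' ?_ EventuallyEq.rfl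
    filter_upwards [hne] with n hn
    rw [mul_sub, mul_left_comm, mul_normalizedMultichoose_add_one, inv_mul_cancel_left₀ hn,
      inv_one, one_mul, ← inv_Gamma_eq_mul_inv_Gamma_add_one]
  · rcases eq_or_ne x 0 with rfl | hx
    · exact isBigO_normalizedMultichoose_sub_of_mem_Ico (by norm_num)
    refine ((isBigO_mul_sub_mul hbdd hfactor h).const_mul_left x⁻¹).congr_left fun n => ?_
    rw [← mul_normalizedMultichoose_add_one, inv_Gamma_eq_mul_inv_Gamma_add_one x]
    field_simp

theorem isBigO_normalizedMultichoose_sub (x : ℝ) :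
    (fun n => normalizedMultichoose x n - (Real.Gamma x)⁻¹) =O[atTop]
      fun n : ℕ => ((n : ℝ) + 1)⁻¹ := by
  have periodic : Function.Periodic (fun x : ℝ =>
      (fun n => normalizedMultichoose x n - (Real.Gamma x)⁻¹) =O[atTop]
        fun n : ℕ => ((n : ℝ) + 1)⁻¹) 1 :=
    fun x => propext (isBigO_normalizedMultichoose_sub_add_one_iff x)
  obtain ⟨y, hy, hxy⟩ := periodic.exists_mem_Ico one_pos x 1
  rw [one_add_one_eq_two] at hy
  exact hxy.mpr (isBigO_normalizedMultichoose_sub_of_mem_Ico hy)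

theorem tendsto_normalizedMultichoose (x : ℝ) :
    Tendsto (normalizedMultichoose x) atTop (𝓝 (Real.Gamma x)⁻¹) :=
  tendsto_sub_nhds_zero_iff.1
    ((isBigO_normalizedMultichoose_sub x).trans_tendsto tendsto_inv_natCast_add_one)

theorem tendsto_natCast_add_one_rpow_of_neg {r : ℝ} (hr : r < 0) :
    Tendsto (fun n : ℕ => ((n : ℝ) + 1) ^ r) atTop (𝓝 0) := by
  have := (tendsto_rpow_neg_atTop (neg_pos.2 hr)).comp
    (tendsto_atTop_add_const_right atTop (1 : ℝ) tendsto_natCast_atTop_atTop)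
  simpa only [neg_neg, Function.comp_def] using this

theorem summable_natCast_add_one_rpow {r : ℝ} (hr : r < -1) :
    Summable fun n : ℕ => ((n : ℝ) + 1) ^ r := by
  simpa only [Nat.cast_add_one] using (summable_nat_add_iff 1).2 (Real.summable_nat_rpow.2 hr)

theorem isBigO_mul_natCast_add_one_rpow {f : ℕ → ℝ} {m : ℝ}
    (hf : (fun n => f n - m) =O[atTop] fun n : ℕ => ((n : ℝ) + 1)⁻¹) (r : ℝ) :
    (fun n => f n * ((n : ℝ) + 1) ^ r - m * ((n : ℝ) + 1) ^ r) =O[atTop]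
      fun n : ℕ => ((n : ℝ) + 1) ^ (r - 1) := by
  refine (hf.mul (isBigO_refl (fun n : ℕ => ((n : ℝ) + 1) ^ r) atTop)).congr
    (fun n => sub_mul _ _ _) fun n => ?_
  rw [Real.rpow_sub_one n.cast_add_one_ne_zero, inv_mul_eq_div]

theorem tendsto_multichoose_div_sub {x y : ℝ} (hy : ∀ m : ℕ, y ≠ -m) (hxy : x < y + 1) :
    Tendsto (fun n : ℕ => multichoose x n / multichoose y n -
      Real.Gamma y / Real.Gamma x * ((n : ℝ) + 1) ^ (x - y)) atTop (𝓝 0) := by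
  have hratio := isBigO_mul_sub_mul (tendsto_inv_natCast_add_one.isBigO_one ℝ)
    (isBigO_normalizedMultichoose_sub x) (isBigO_inv_sub_inv tendsto_inv_natCast_add_one
      (isBigO_normalizedMultichoose_sub y) (inv_ne_zero (Real.Gamma_ne_zero hy)))
  refine ((isBigO_mul_natCast_add_one_rpow hratio (x - y)).trans_tendsto
    (tendsto_natCast_add_one_rpow_of_neg (by linarith))).congr fun n => ?_
  have hn : (0 : ℝ) < n + 1 := n.cast_add_one_pos
  rw [multichoose_eq_normalizedMultichoose_mul x, multichoose_eq_normalizedMultichoose_mul y,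
    mul_div_mul_comm, ← Real.rpow_sub hn, sub_sub_sub_cancel_right, inv_inv, inv_mul_eq_div,
    ← div_eq_mul_inv]

theorem tendsto_multichoose_div_of_lt {x y : ℝ} (hy : ∀ m : ℕ, y ≠ -m) (hxy : x < y) :
    Tendsto (fun n : ℕ => multichoose x n / multichoose y n) atTop (𝓝 0) := by
  have hpow := (tendsto_natCast_add_one_rpow_of_neg (sub_neg.2 hxy)).const_mul
    (Real.Gamma y / Real.Gamma x)
  simpa using (tendsto_multichoose_div_sub hy (hxy.trans (lt_add_one y))).add hpow

theorem isBigO_multichoose_sub_rpow (x : ℝ) :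
    (fun n : ℕ => multichoose x n - (Real.Gamma x)⁻¹ * ((n : ℝ) + 1) ^ (x - 1)) =O[atTop]
      fun n : ℕ => ((n : ℝ) + 1) ^ (x - 1 - 1) := by
  simpa only [← multichoose_eq_normalizedMultichoose_mul] using
    isBigO_mul_natCast_add_one_rpow (isBigO_normalizedMultichoose_sub x) (x - 1)

theorem isBigO_ordinaryHypergeometricCoefficient_sub_rpow (a b : ℝ) {c : ℝ}
    (hc : ∀ m : ℕ, c ≠ -m) :
    (fun n : ℕ => ordinaryHypergeometricCoefficient a b c n -
        Real.Gamma c / (Real.Gamma a * Real.Gamma b) * ((n : ℝ) + 1) ^ (a + b - c - 1)) =O[atTop]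
      fun n : ℕ => ((n : ℝ) + 1) ^ (a + b - c - 1 - 1) := by
  have hbdd := tendsto_inv_natCast_add_one.isBigO_one ℝ
  have hratio := isBigO_mul_sub_mul hbdd (isBigO_mul_sub_mul hbdd
    (isBigO_normalizedMultichoose_sub a) (isBigO_normalizedMultichoose_sub b))
    (isBigO_inv_sub_inv tendsto_inv_natCast_add_one
      (isBigO_normalizedMultichoose_sub c) (inv_ne_zero (Real.Gamma_ne_zero hc)))
  refine (isBigO_mul_natCast_add_one_rpow hratio (a + b - c - 1)).congr_left fun n => ?_
  have hn : (0 : ℝ) < n + 1 := n.cast_add_one_pos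
  rw [ordinaryHypergeometricCoefficient_eq_multichoose, multichoose_eq_normalizedMultichoose_mul a,
    multichoose_eq_normalizedMultichoose_mul b, multichoose_eq_normalizedMultichoose_mul c,
    mul_mul_mul_comm, mul_div_mul_comm, ← Real.rpow_add hn, ← Real.rpow_sub hn, inv_inv,
    ← mul_inv, inv_mul_eq_div, ← div_eq_mul_inv,
    show a - 1 + (b - 1) - (c - 1) = a + b - c - 1 by ring]

theorem isBigO_ordinaryHypergeometricCoefficient (a b : ℝ) {c : ℝ} (hc : ∀ m : ℕ, c ≠ -m) :
    ordinaryHypergeometricCoefficient a b c =O[atTop]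
      fun n : ℕ => ((n : ℝ) + 1) ^ (a + b - c - 1) := by
  have hpow : (fun n : ℕ => ((n : ℝ) + 1) ^ (a + b - c - 1 - 1)) =O[atTop]
      fun n : ℕ => ((n : ℝ) + 1) ^ (a + b - c - 1) := by
    refine IsBigO.of_norm_le fun n => ?_
    rw [Real.norm_of_nonneg (by positivity)]
    exact Real.rpow_le_rpow_of_exponent_le (by simp) (sub_le_self _ one_pos.le)
  simpa only [sub_add_cancel] using
    ((isBigO_ordinaryHypergeometricCoefficient_sub_rpow a b hc).trans hpow).add
      ((isBigO_refl _ _).const_mul_left (Real.Gamma c / (Real.Gamma a * Real.Gamma b)))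

theorem tendsto_natCast_mul_of_isBigO_rpow {f : ℕ → ℝ} {r : ℝ} (hr : r < -1)
    (hf : f =O[atTop] fun n : ℕ => ((n : ℝ) + 1) ^ r) :
    Tendsto (fun n : ℕ => n * f n) atTop (𝓝 0) := by
  have hn : (fun n : ℕ => (n : ℝ)) =O[atTop] fun n : ℕ => (n : ℝ) + 1 :=
    IsBigO.of_norm_le fun n => by simp
  refine (hn.mul hf).trans_tendsto ((tendsto_natCast_add_one_rpow_of_neg
    (r := r + 1) (by linarith)).congr fun n => ?_)
  rw [Real.rpow_add_one n.cast_add_one_ne_zero, mul_comm]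

end MultichooseAsymptotics

section GaussSummation

variable {a b c : ℝ}

theorem summable_ordinaryHypergeometricCoefficient (hc : ∀ m : ℕ, c ≠ -m) (habc : a + b < c) :
    Summable (ordinaryHypergeometricCoefficient a b c) :=
  summable_of_isBigO_nat (summable_natCast_add_one_rpow (by linarith))
    (isBigO_ordinaryHypergeometricCoefficient a b hc)

theorem contiguous_tsum_ordinaryHypergeometricCoefficient (hc : ∀ m : ℕ, c ≠ -m)
    (habc : a + b < c) :
    c * (c - a - b) * ∑' k, ordinaryHypergeometricCoefficient a b c k =
      (c - a) * (c - b) * ∑' k, ordinaryHypergeometricCoefficient a b (c + 1) k := by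
  have hc0 : c ≠ 0 := by simpa using hc 0
  have hc1 : ∀ m : ℕ, c + 1 ≠ -m := by exact_mod_cast add_natCast_ne_neg_natCast hc 1
  have hsum := (summable_ordinaryHypergeometricCoefficient hc habc).hasSum.tendsto_sum_nat
  have hsum1 := (summable_ordinaryHypergeometricCoefficient (a := a) (b := b) hc1
    (by linarith)).hasSum.tendsto_sum_nat
  have hboundary := tendsto_natCast_mul_of_isBigO_rpow (by linarith)
    (isBigO_ordinaryHypergeometricCoefficient a b hc)
  have hlim := tendsto_nhds_unique (hsum.const_mul (c - a - b))
    (((hsum1.const_mul _).sub hboundary).congr fun n =>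
      (contiguous_sum_range_ordinaryHypergeometricCoefficient a b hc n).symm)
  rw [mul_assoc, hlim]
  field_simp
  ring

theorem multichoose_mul_tsum_ordinaryHypergeometricCoefficient (hc : ∀ m : ℕ, c ≠ -m)
    (habc : a + b < c) (n : ℕ) :
    multichoose c n * multichoose (c - a - b) n * ∑' k, ordinaryHypergeometricCoefficient a b c k =
      multichoose (c - a) n * multichoose (c - b) n *
        ∑' k, ordinaryHypergeometricCoefficient a b (c + n) k := by
  induction n with
  | zero => simp
  | succ n ih =>
    have hn : (n + 1 : ℝ) ≠ 0 := n.cast_add_one_ne_zero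
    have hstep := contiguous_tsum_ordinaryHypergeometricCoefficient (a := a) (b := b)
      (add_natCast_ne_neg_natCast hc n) (by linarith [n.cast_nonneg (α := ℝ)])
    have hsucc (x : ℝ) : multichoose x (n + 1) = (x + n) * multichoose x n / (n + 1) :=
      eq_div_of_mul_eq hn (by rw [mul_comm, succ_mul_multichoose_succ])
    simp only [hsucc, Nat.cast_add_one, ← add_assoc]
    field_simp
    linear_combination (c + n) * (c - a - b + n) * ih +
      multichoose (c - a) n * multichoose (c - b) n * hstep

theorem norm_ordinaryHypergeometricCoefficient_add_natCast_le (hc : 0 < c) (m k : ℕ) :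
    ‖ordinaryHypergeometricCoefficient a b (c + m) k‖ ≤
      ‖ordinaryHypergeometricCoefficient a b c k‖ := by
  induction m with
  | zero => simp
  | succ m ih =>
    have hcm : 0 < c + m := by positivity
    have hcmk : 0 < c + m + k := by positivity
    have hshift := eq_div_of_mul_eq hcmk.ne' ((mul_comm _ _).trans
      (ordinaryHypergeometricCoefficient_add_one_right a b (ne_neg_natCast_of_pos hcm) k))
    rw [Nat.cast_add_one, ← add_assoc, hshift, mul_div_right_comm, norm_mul]
    refine (mul_le_of_le_one_left (norm_nonneg _) ?_).trans ih
    rw [Real.norm_of_nonneg (by positivity), div_le_one hcmk]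
    exact le_add_of_nonneg_right k.cast_nonneg

theorem tendsto_ordinaryHypergeometricCoefficient_add_natCast (k : ℕ) :
    Tendsto (fun m : ℕ => ordinaryHypergeometricCoefficient a b (c + m) k) atTop
      (𝓝 (if k = 0 then 1 else 0)) := by
  rcases k with _ | k
  · simp [ordinaryHypergeometricCoefficient]
  have hdegree : 0 < (ascPochhammer ℝ (k + 1)).degree :=
    Polynomial.natDegree_pos_iff_degree_pos.1 (by simp)
  have hpoch := (Polynomial.tendsto_atTop_of_leadingCoeff_nonneg _ hdegree
    (by rw [(monic_ascPochhammer ℝ (k + 1)).leadingCoeff]; exact one_pos.le)).comp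
    (tendsto_atTop_add_const_left atTop c tendsto_natCast_atTop_atTop)
  simpa [Function.comp_def] using hpoch.inv_tendsto_atTop.const_mul
    (((k + 1).factorial : ℝ)⁻¹ * (ascPochhammer ℝ (k + 1)).eval a *
      (ascPochhammer ℝ (k + 1)).eval b)

theorem tendsto_tsum_ordinaryHypergeometricCoefficient_add_natCast_of_pos (hc : 0 < c)
    (habc : a + b < c) :
    Tendsto (fun m : ℕ => ∑' k, ordinaryHypergeometricCoefficient a b (c + m) k) atTop (𝓝 1) := by
  simpa only [tsum_ite_eq] using tendsto_tsum_of_dominated_convergence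
    (summable_ordinaryHypergeometricCoefficient (ne_neg_natCast_of_pos hc) habc).norm
    tendsto_ordinaryHypergeometricCoefficient_add_natCast
    (Eventually.of_forall (norm_ordinaryHypergeometricCoefficient_add_natCast_le hc))

theorem tendsto_tsum_ordinaryHypergeometricCoefficient_add_natCast (a b c : ℝ) :
    Tendsto (fun m : ℕ => ∑' k, ordinaryHypergeometricCoefficient a b (c + m) k) atTop (𝓝 1) := by
  obtain ⟨m, hm⟩ := exists_nat_gt (max (-c) (a + b - c))
  obtain ⟨hpos, habc⟩ := max_lt_iff.1 hm
  refine (tendsto_add_atTop_iff_nat m).1 ?_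
  simpa only [Nat.cast_add, add_comm (_ : ℝ) (m : ℝ), ← add_assoc] using
    tendsto_tsum_ordinaryHypergeometricCoefficient_add_natCast_of_pos (a := a) (b := b)
      (c := c + m) (by linarith) (by linarith)

theorem hasSum_ordinaryHypergeometricCoefficient (hc : ∀ m : ℕ, c ≠ -m) (habc : a + b < c) :
    HasSum (ordinaryHypergeometricCoefficient a b c)
      (Real.Gamma c * Real.Gamma (c - a - b) / (Real.Gamma (c - a) * Real.Gamma (c - b))) := by
  rw [(summable_ordinaryHypergeometricCoefficient hc habc).hasSum_iff]
  have hnormalized (n : ℕ) : normalizedMultichoose c n * normalizedMultichoose (c - a - b) n *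
      ∑' k, ordinaryHypergeometricCoefficient a b c k =
      normalizedMultichoose (c - a) n * normalizedMultichoose (c - b) n *
        ∑' k, ordinaryHypergeometricCoefficient a b (c + n) k := by
    have hn : (0 : ℝ) < n + 1 := n.cast_add_one_pos
    simp only [normalizedMultichoose]
    rw [mul_mul_mul_comm, mul_mul_mul_comm (multichoose (c - a) n), ← Real.rpow_add hn,
      ← Real.rpow_add hn, mul_right_comm,
      multichoose_mul_tsum_ordinaryHypergeometricCoefficient hc habc, mul_right_comm,
      show 1 - c + (1 - (c - a - b)) = 1 - (c - a) + (1 - (c - b)) by ring]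
  have hlim := tendsto_nhds_unique
    (((tendsto_normalizedMultichoose c).mul (tendsto_normalizedMultichoose (c - a - b))).mul_const
      (∑' k, ordinaryHypergeometricCoefficient a b c k))
    ((((tendsto_normalizedMultichoose (c - a)).mul (tendsto_normalizedMultichoose (c - b))).mul
      (tendsto_tsum_ordinaryHypergeometricCoefficient_add_natCast a b c)).congr
        fun n => (hnormalized n).symm)
  have hΓc := Real.Gamma_ne_zero hc
  have hΓ := Real.Gamma_pos_of_pos (show 0 < c - a - b by linarith)
  rw [mul_one, ← mul_inv, ← mul_inv, inv_mul_eq_iff_eq_mul₀ (mul_ne_zero hΓc hΓ.ne')] at hlim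
  rw [hlim, div_eq_mul_inv]

end GaussSummation

section RegularizedGauss

variable {a b c : ℝ}

/-- The term `(a)ₖ (b)ₖ / ((c)ₖ k!)` of `₂F₁(a, b; c; 1)` minus the multiple of the coefficient of
`t ^ k` in `(1 - t) ^ (-(a + b - c))` which has the same leading asymptotics; subtracting it makes
the Gauss series summable for `a + b - c < 1`. -/
noncomputable def regularizedCoefficient (a b c : ℝ) (k : ℕ) : ℝ :=
  ordinaryHypergeometricCoefficient a b c k -
    Real.Gamma c * Real.Gamma (a + b - c) / (Real.Gamma a * Real.Gamma b) *
      multichoose (a + b - c) k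

theorem isBigO_regularizedCoefficient (hc : ∀ m : ℕ, c ≠ -m) (hs : ∀ m : ℕ, a + b - c ≠ -m) :
    regularizedCoefficient a b c =O[atTop] fun k : ℕ => ((k : ℝ) + 1) ^ (a + b - c - 1 - 1) := by
  have hΓ := Real.Gamma_ne_zero hs
  refine ((isBigO_ordinaryHypergeometricCoefficient_sub_rpow a b hc).sub
    ((isBigO_multichoose_sub_rpow (a + b - c)).const_mul_left
      (Real.Gamma c * Real.Gamma (a + b - c) / (Real.Gamma a * Real.Gamma b)))).congr_left
        fun k => ?_
  rw [regularizedCoefficient]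
  field_simp
  ring

theorem summable_regularizedCoefficient (hc : ∀ m : ℕ, c ≠ -m) (hs : ∀ m : ℕ, a + b - c ≠ -m)
    (hs1 : a + b - c < 1) : Summable (regularizedCoefficient a b c) :=
  summable_of_isBigO_nat (summable_natCast_add_one_rpow (by linarith))
    (isBigO_regularizedCoefficient hc hs)

theorem sum_range_regularizedCoefficient (a b : ℝ) (hc : ∀ m : ℕ, c ≠ -m) (n : ℕ) :
    (c - a - b) * ∑ k ∈ range n, regularizedCoefficient a b c k =
      (c - a) * (c - b) / c * (∑ k ∈ range n, ordinaryHypergeometricCoefficient a b (c + 1) k) -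
        n * regularizedCoefficient a b c n := by
  simp only [regularizedCoefficient, sum_sub_distrib, ← mul_sum]
  linear_combination contiguous_sum_range_ordinaryHypergeometricCoefficient a b hc n +
    Real.Gamma c * Real.Gamma (a + b - c) / (Real.Gamma a * Real.Gamma b) *
      mul_sum_range_multichoose (a + b - c) n

theorem hasSum_regularizedCoefficient (hc : ∀ m : ℕ, c ≠ -m) (hs : ∀ m : ℕ, a + b - c ≠ -m)
    (hs1 : a + b - c < 1) :
    HasSum (regularizedCoefficient a b c)
      (Real.Gamma c * Real.Gamma (c - a - b) / (Real.Gamma (c - a) * Real.Gamma (c - b))) := by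
  have hsummable := summable_regularizedCoefficient hc hs hs1
  rw [hsummable.hasSum_iff]
  have hc0 : c ≠ 0 := by simpa using hc 0
  have hs0 : c - a - b ≠ 0 := fun h => hs 0 (by simp; linarith)
  have hc1 : ∀ m : ℕ, c + 1 ≠ -m := by exact_mod_cast add_natCast_ne_neg_natCast hc 1
  have hgauss := (hasSum_ordinaryHypergeometricCoefficient (a := a) (b := b) hc1
    (by linarith)).tendsto_sum_nat
  have hboundary := tendsto_natCast_mul_of_isBigO_rpow (by linarith)
    (isBigO_regularizedCoefficient hc hs)
  have hlim := tendsto_nhds_unique (hsummable.hasSum.tendsto_sum_nat.const_mul (c - a - b))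
    (((hgauss.const_mul _).sub hboundary).congr fun n =>
      (sum_range_regularizedCoefficient a b hc n).symm)
  refine mul_left_cancel₀ hs0 (hlim.trans ?_)
  have hshift (x : ℝ) := inv_Gamma_eq_mul_inv_Gamma_add_one x
  rw [sub_zero, Real.Gamma_add_one hc0, show c + 1 - a - b = c - a - b + 1 by ring,
    Real.Gamma_add_one hs0, div_eq_mul_inv _ (_ * _), div_eq_mul_inv _ (_ * _), mul_inv, mul_inv,
    hshift (c - a), hshift (c - b), ← sub_add_eq_add_sub, ← sub_add_eq_add_sub]
  field_simp

end RegularizedGauss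

section Convolution

variable {r w : ℕ → ℝ}

theorem tendsto_div_add_of_tendsto_div_succ (hw : ∀ n, w n ≠ 0)
    (hratio : Tendsto (fun n => w n / w (n + 1)) atTop (𝓝 1)) (k : ℕ) :
    Tendsto (fun n => w n / w (n + k)) atTop (𝓝 1) := by
  induction k with
  | zero => simp [hw]
  | succ k ih =>
    simpa only [mul_one, Function.comp_def, div_mul_div_cancel₀ (hw _), add_assoc] using
      ih.mul (hratio.comp (tendsto_add_atTop_nat k))

theorem tendsto_sum_antidiagonal_mul_div (hr : Summable r) (hw : Monotone w) (hpos : ∀ n, 0 < w n)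
    (hratio : Tendsto (fun n => w n / w (n + 1)) atTop (𝓝 1)) :
    Tendsto (fun n => (∑ ij ∈ antidiagonal n, r ij.1 * w ij.2) / w n) atTop (𝓝 (∑' k, r k)) := by
  have hsum (n : ℕ) : (∑ ij ∈ antidiagonal n, r ij.1 * w ij.2) / w n =
      ∑' k, if k ∈ range (n + 1) then r k * (w (n - k) / w n) else 0 := by
    rw [tsum_eq_sum fun k hk => if_neg hk, Nat.sum_antidiagonal_eq_sum_range_succ
      (fun i j => r i * w j), sum_div]
    exact sum_congr rfl fun k hk => by rw [if_pos hk, mul_div_assoc]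
  simp only [hsum]
  refine tendsto_tsum_of_dominated_convergence hr.norm (fun k => ?_) (Eventually.of_forall
    fun n k => ?_)
  · have hlim := tendsto_div_add_of_tendsto_div_succ (fun n => (hpos n).ne') hratio k
    refine (tendsto_add_atTop_iff_nat k).1 ?_
    simpa [Nat.lt_succ_iff] using hlim.const_mul (r k)
  · split_ifs
    · rw [norm_mul, Real.norm_of_nonneg (div_pos (hpos _) (hpos _)).le]
      exact mul_le_of_le_one_right (norm_nonneg _) ((div_le_one (hpos n)).2 (hw (n.sub_le k)))
    · simp

end Convolution

section Multichoose

variable {β : ℝ}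

theorem multichoose_pos {x : ℝ} (hx : 0 < x) (n : ℕ) : 0 < multichoose x n := by
  rw [multichoose_eq_ascPochhammer_div_factorial]
  exact div_pos (ascPochhammer_pos n x hx) (by positivity)

theorem monotone_multichoose (hβ : 1 ≤ β) : Monotone (multichoose β) := by
  refine monotone_nat_of_le_succ fun n => ?_
  have hn : (0 : ℝ) < n + 1 := n.cast_add_one_pos
  rw [← mul_le_mul_iff_right₀ hn, succ_mul_multichoose_succ, add_comm]
  have := (multichoose_pos (one_pos.trans_le hβ) n).le
  gcongr

theorem tendsto_multichoose_div_succ (hβ : 0 < β) :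
    Tendsto (fun n => multichoose β n / multichoose β (n + 1)) atTop (𝓝 1) := by
  have hlim := (tendsto_natCast_div_add_atTop β).add
    ((tendsto_const_nhds (x := (1 : ℝ))).div_atTop
      (tendsto_atTop_add_const_right atTop β tendsto_natCast_atTop_atTop))
  rw [add_zero] at hlim
  refine hlim.congr fun n => ?_
  have hn : (n : ℝ) + β ≠ 0 := by positivity
  rw [← add_div, div_eq_div_iff hn (multichoose_pos hβ _).ne', succ_mul_multichoose_succ]
  ring

end Multichoose

section RegularizedConvolution

variable {a b c β : ℝ}

theorem sum_antidiagonal_regularizedCoefficient_mul_multichoose (a b c β : ℝ) (n : ℕ) :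
    ∑ ij ∈ antidiagonal n, regularizedCoefficient a b c ij.1 * multichoose β ij.2 =
      (∑ ij ∈ antidiagonal n,
        ordinaryHypergeometricCoefficient a b c ij.1 * multichoose β ij.2) -
      Real.Gamma c * Real.Gamma (a + b - c) / (Real.Gamma a * Real.Gamma b) *
        multichoose (a + b - c + β) n := by
  simp only [regularizedCoefficient, sub_mul, sum_sub_distrib, mul_assoc, ← mul_sum,
    sum_antidiagonal_multichoose_mul]

theorem tendsto_sum_antidiagonal_mul_multichoose_sub_div (hc : ∀ m : ℕ, c ≠ -m)
    (hs : ∀ m : ℕ, a + b - c ≠ -m) (hs1 : a + b - c < 1) (hβ : 1 ≤ β) :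
    Tendsto (fun n => ((∑ ij ∈ antidiagonal n,
        ordinaryHypergeometricCoefficient a b c ij.1 * multichoose β ij.2) -
      Real.Gamma c * Real.Gamma (a + b - c) / (Real.Gamma a * Real.Gamma b) *
        multichoose (a + b - c + β) n) / multichoose β n) atTop
      (𝓝 (Real.Gamma c * Real.Gamma (c - a - b) / (Real.Gamma (c - a) * Real.Gamma (c - b)))) := by
  have hβ0 : 0 < β := one_pos.trans_le hβ
  have hsum := hasSum_regularizedCoefficient hc hs hs1
  simpa only [hsum.tsum_eq, sum_antidiagonal_regularizedCoefficient_mul_multichoose] using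
    tendsto_sum_antidiagonal_mul_div hsum.summable (monotone_multichoose hβ) (multichoose_pos hβ0)
      (tendsto_multichoose_div_succ hβ0)

end RegularizedConvolution

section CostIdentity

theorem centralBinom_eq_four_pow_mul_multichoose (K : Type*) [Field K] [CharZero K] [BinomialRing K]
    (n : ℕ) : (n.centralBinom : K) = 4 ^ n * multichoose (1 / 2) n := by
  induction n with
  | zero => simp
  | succ n ih =>
    have hn : (n + 1 : K) ≠ 0 := n.cast_add_one_ne_zero
    have hrec : (n + 1 : K) * (n + 1).centralBinom = 2 * (2 * n + 1) * n.centralBinom := by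
      exact_mod_cast n.succ_mul_centralBinom_succ
    refine mul_left_cancel₀ hn ?_
    linear_combination hrec + 2 * (2 * n + 1) * ih -
      4 ^ (n + 1) * succ_mul_multichoose_succ (1 / 2 : K) n

theorem succ_mul_centralBinom_succ_eq_multichoose (n : ℕ) :
    (n + 1 : ℝ) * (n + 1).centralBinom = 2 * 4 ^ n * multichoose (3 / 2) n := by
  rw [centralBinom_eq_four_pow_mul_multichoose, mul_left_comm, succ_mul_multichoose_succ,
    ← mul_multichoose_add_one]
  norm_num
  ring

theorem Gamma_two_mul_add_eq_multichoose {x : ℝ} (hx : ∀ m : ℕ, x ≠ -m) (k : ℕ) :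
    Real.Gamma (2 * k + x) = 4 ^ k * k.factorial ^ 2 *
      (multichoose (x / 2) k * multichoose ((x + 1) / 2) k) * Real.Gamma x := by
  induction k with
  | zero => simp
  | succ k ih =>
    have h₀ : 2 * (k : ℝ) + x ≠ 0 := fun h => hx (2 * k) (by push_cast; linarith)
    have h₁ : 2 * (k : ℝ) + x + 1 ≠ 0 := fun h => hx (2 * k + 1) (by push_cast; linarith)
    have ha := succ_mul_multichoose_succ (x / 2) k
    have hb := succ_mul_multichoose_succ ((x + 1) / 2) k
    rw [show 2 * ((k + 1 : ℕ) : ℝ) + x = 2 * k + x + 1 + 1 by push_cast; ring,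
      Real.Gamma_add_one h₁, Real.Gamma_add_one h₀, ih, Nat.factorial_succ]
    push_cast
    linear_combination -4 ^ (k + 1) * k.factorial ^ 2 * Real.Gamma x *
      ((k + 1) * multichoose ((x + 1) / 2) (k + 1) * ha + (x / 2 + k) * multichoose (x / 2) k * hb)

theorem catalan_mul_Gamma_div_factorial {p : ℝ} (hp : ∀ m : ℕ, 1 + p ≠ -m) (k : ℕ) :
    catalan k * Real.Gamma (2 * k + 1 + p) / (2 * k).factorial = 4 ^ k * (Real.Gamma (1 + p) *
      ordinaryHypergeometricCoefficient ((1 + p) / 2) (1 + p / 2) 2 k) := by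
  have hcatalan : ((k : ℝ) + 1) * catalan k = k.centralBinom := by
    exact_mod_cast succ_mul_catalan_eq_centralBinom k
  have hfactorial : ((2 * k).factorial : ℝ) = k.centralBinom * k.factorial ^ 2 := by
    rw [Nat.centralBinom_eq_two_mul_choose, two_mul, sq, ← mul_assoc]
    exact_mod_cast (Nat.add_choose_mul_factorial_mul_factorial k k).symm
  have hk : (k : ℝ) + 1 ≠ 0 := k.cast_add_one_ne_zero
  have hB : (k.centralBinom : ℝ) ≠ 0 := Nat.cast_ne_zero.2 k.centralBinom_ne_zero
  rw [add_assoc, Gamma_two_mul_add_eq_multichoose hp, hfactorial,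
    ordinaryHypergeometricCoefficient_eq_multichoose, multichoose_two,
    show (1 + p + 1) / 2 = 1 + p / 2 by ring]
  field_simp
  linear_combination Real.Gamma (1 + p) * multichoose ((1 + p) / 2) k *
    multichoose ((2 + p) / 2) k * hcatalan

theorem dyckEdgeCount_eq_multichoose (k j : ℕ) :
    dyckEdgeCount (k + j + 1) k = catalan k * 4 ^ j * (1 + multichoose (3 / 2 : ℝ) j) := by
  rw [dyckEdgeCount, show k + j + 1 - k = j + 1 by omega, ← Nat.centralBinom_eq_two_mul_choose,
    Nat.add_sub_cancel]
  push_cast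
  linear_combination catalan k / 2 * succ_mul_centralBinom_succ_eq_multichoose j

theorem dyckCostES_succ_eq_sum_antidiagonal {p : ℝ} (hp : ∀ m : ℕ, 1 + p ≠ -m) (n : ℕ) :
    dyckCostES p (n + 1) / ((n + 1 : ℕ) : ℝ) = Real.Gamma (1 + p) / 2 *
      ((∑ ij ∈ antidiagonal n, ordinaryHypergeometricCoefficient ((1 + p) / 2) (1 + p / 2) 2 ij.1 *
          multichoose 1 ij.2) / multichoose (3 / 2) n +
        (∑ ij ∈ antidiagonal n, ordinaryHypergeometricCoefficient ((1 + p) / 2) (1 + p / 2) 2 ij.1 *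
          multichoose (3 / 2) ij.2) / multichoose (3 / 2) n) := by
  have hterm : ∀ ij ∈ antidiagonal n, dyckEdgeCount (n + 1) ij.1 *
      Real.Gamma (2 * ij.1 + 1 + p) / (2 * ij.1).factorial = 4 ^ n * Real.Gamma (1 + p) *
        (ordinaryHypergeometricCoefficient ((1 + p) / 2) (1 + p / 2) 2 ij.1 * multichoose 1 ij.2 +
        ordinaryHypergeometricCoefficient ((1 + p) / 2) (1 + p / 2) 2 ij.1 *
          multichoose (3 / 2) ij.2) := by
    rintro ⟨k, j⟩ hkj
    obtain rfl := mem_antidiagonal.1 hkj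
    dsimp only
    rw [dyckEdgeCount_eq_multichoose, multichoose_one, pow_add]
    linear_combination
      4 ^ j * (1 + multichoose (3 / 2 : ℝ) j) * catalan_mul_Gamma_div_factorial hp k
  have hW := (multichoose_pos (show (0 : ℝ) < 3 / 2 by norm_num) n).ne'
  have hB : (n + 1).centralBinom * ((n + 1 : ℕ) : ℝ) = 2 * 4 ^ n * multichoose (3 / 2) n := by
    rw [mul_comm, Nat.cast_add_one, succ_mul_centralBinom_succ_eq_multichoose]
  rw [dyckCostES, ← Nat.centralBinom_eq_two_mul_choose, ← Nat.sum_antidiagonal_eq_sum_range_succ_mk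
    (fun ij : ℕ × ℕ => dyckEdgeCount (n + 1) ij.1 * Real.Gamma (2 * ij.1 + 1 + p) /
      (2 * ij.1).factorial), sum_congr rfl hterm, ← mul_sum, sum_add_distrib, inv_mul_eq_div,
    div_div, hB]
  field_simp

end CostIdentity

section CostAsymptotics

variable {a b c p : ℝ}

theorem tendsto_sum_antidiagonal_mul_multichoose_div (hc : ∀ m : ℕ, c ≠ -m)
    (hs : ∀ m : ℕ, a + b - c ≠ -m) (hs1 : a + b - c < 1) {β γ : ℝ} (hβ : 1 ≤ β) (hβγ : β < γ)
    (hsγ : a + b - c + β < γ) :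
    Tendsto (fun n => (∑ ij ∈ antidiagonal n,
      ordinaryHypergeometricCoefficient a b c ij.1 * multichoose β ij.2) / multichoose γ n)
      atTop (𝓝 0) := by
  have hβ0 : 0 < β := one_pos.trans_le hβ
  have hγ := ne_neg_natCast_of_pos (hβ0.trans hβγ)
  have hremainder := (tendsto_sum_antidiagonal_mul_multichoose_sub_div hc hs hs1 hβ).mul
    (tendsto_multichoose_div_of_lt hγ hβγ)
  have hleading := (tendsto_multichoose_div_of_lt hγ hsγ).const_mul
    (Real.Gamma c * Real.Gamma (a + b - c) / (Real.Gamma a * Real.Gamma b))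
  have hsum := hremainder.add hleading
  rw [mul_zero, mul_zero, add_zero] at hsum
  refine hsum.congr fun n => ?_
  rw [div_mul_div_cancel₀ (multichoose_pos hβ0 n).ne', ← mul_div_assoc, ← add_div, sub_add_cancel]

theorem tendsto_sum_antidiagonal_mul_multichoose_div_sub_rpow (hc : ∀ m : ℕ, c ≠ -m)
    (hs : ∀ m : ℕ, a + b - c ≠ -m) (hs1 : a + b - c < 1) {β : ℝ} (hβ : 1 ≤ β) :
    Tendsto (fun n : ℕ => (∑ ij ∈ antidiagonal n,
        ordinaryHypergeometricCoefficient a b c ij.1 * multichoose β ij.2) / multichoose β n -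
      Real.Gamma c * Real.Gamma (a + b - c) / (Real.Gamma a * Real.Gamma b) *
        (Real.Gamma β / Real.Gamma (a + b - c + β)) * ((n : ℝ) + 1) ^ (a + b - c)) atTop
      (𝓝 (Real.Gamma c * Real.Gamma (c - a - b) / (Real.Gamma (c - a) * Real.Gamma (c - b)))) := by
  have hleading := (tendsto_multichoose_div_sub (x := a + b - c + β)
    (ne_neg_natCast_of_pos (one_pos.trans_le hβ)) (by linarith)).const_mul
      (Real.Gamma c * Real.Gamma (a + b - c) / (Real.Gamma a * Real.Gamma b))
  have hsum := (tendsto_sum_antidiagonal_mul_multichoose_sub_div hc hs hs1 hβ).add hleading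
  rw [mul_zero, add_zero] at hsum
  refine hsum.congr fun n => ?_
  rw [add_sub_cancel_right]
  ring

theorem Gamma_div_Gamma_mul_Gamma_eq (p : ℝ) :
    Real.Gamma 2 * Real.Gamma ((1 + p) / 2 + (1 + p / 2) - 2) /
        (Real.Gamma ((1 + p) / 2) * Real.Gamma (1 + p / 2)) =
      2 ^ p * Real.Gamma (p - 1 / 2) / (√Real.pi * Real.Gamma (p + 1)) := by
  have hdup := Real.Gamma_mul_Gamma_add_half ((1 + p) / 2)
  rw [show (1 + p) / 2 + 1 / 2 = 1 + p / 2 by ring, show 2 * ((1 + p) / 2) = p + 1 by ring,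
    show 1 - (p + 1) = -p by ring, Real.rpow_neg two_pos.le] at hdup
  rw [hdup, Real.Gamma_two, show (1 + p) / 2 + (1 + p / 2) - 2 = p - 1 / 2 by ring]
  field_simp

theorem Gamma_div_Gamma_sub_mul_Gamma_sub_eq (p : ℝ) :
    Real.Gamma 2 * Real.Gamma (2 - (1 + p) / 2 - (1 + p / 2)) /
        (Real.Gamma (2 - (1 + p) / 2) * Real.Gamma (2 - (1 + p / 2))) =
      2 * Real.Gamma (1 / 2 - p) / (2 ^ p * √Real.pi * Real.Gamma (2 - p)) := by
  have hdup := Real.Gamma_mul_Gamma_add_half (2 - (1 + p / 2))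
  rw [show 2 - (1 + p / 2) + 1 / 2 = 2 - (1 + p) / 2 by ring,
    show 2 * (2 - (1 + p / 2)) = 2 - p by ring, show 1 - (2 - p) = p - 1 by ring,
    Real.rpow_sub_one two_ne_zero, mul_comm] at hdup
  rw [hdup, Real.Gamma_two, show 2 - (1 + p) / 2 - (1 + p / 2) = 1 / 2 - p by ring]
  field_simp

theorem Gamma_three_div_two : Real.Gamma (3 / 2) = √Real.pi / 2 := by
  rw [show (3 / 2 : ℝ) = 1 / 2 + 1 by norm_num, Real.Gamma_add_one (by norm_num),
    Real.Gamma_one_half_eq]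
  ring

theorem dyckCostES_subleading_high_p_general (hpole : ∀ m : ℕ, 1 + p ≠ -m)
    (hs : ∀ m : ℕ, p - 1 / 2 ≠ -m) (hp : p < 1) :
    Tendsto (fun N : ℕ => (dyckCostES p N - (2 : ℝ) ^ p * Real.Gamma (p - 1 / 2) /
        (4 * Real.Gamma (p + 1)) * (N : ℝ) ^ (1 / 2 + p)) / (N : ℝ)) atTop
      (𝓝 (Real.Gamma (1 / 2 - p) * Real.Gamma (p + 1) /
        ((2 : ℝ) ^ p * √Real.pi * Real.Gamma (2 - p)))) := by
  have hparam : (1 + p) / 2 + (1 + p / 2) - 2 = p - 1 / 2 := by ring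
  have hc := ne_neg_natCast_of_pos (two_pos (α := ℝ))
  have hΓ : Real.Gamma (p + 1) ≠ 0 := Real.Gamma_ne_zero (by simpa only [add_comm] using hpole)
  have hflat := tendsto_sum_antidiagonal_mul_multichoose_div hc (by rwa [hparam])
    (by linarith) le_rfl (show (1 : ℝ) < 3 / 2 by norm_num) (by linarith)
  have hsqrt := tendsto_sum_antidiagonal_mul_multichoose_div_sub_rpow hc (by rwa [hparam])
    (by linarith) (show (1 : ℝ) ≤ 3 / 2 by norm_num)
  have hlim := (hflat.add hsqrt).const_mul (Real.Gamma (1 + p) / 2)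
  rw [Gamma_div_Gamma_mul_Gamma_eq, Gamma_div_Gamma_sub_mul_Gamma_sub_eq, Gamma_three_div_two,
    hparam, show p - 1 / 2 + 3 / 2 = p + 1 by ring, add_comm 1 p, zero_add] at hlim
  refine (tendsto_add_atTop_iff_nat 1).1 ((hlim.congr fun n => ?_).trans_eq ?_)
  · have hn : (n : ℝ) + 1 ≠ 0 := n.cast_add_one_ne_zero
    rw [sub_div, dyckCostES_succ_eq_sum_antidiagonal hpole, Nat.cast_add_one,
      show 1 / 2 + p = p - 1 / 2 + 1 by ring, Real.rpow_add_one hn, add_comm 1 p]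
    field_simp
    ring
  · field_simp

end CostAsymptotics

theorem dyckCostES_subleading_high_p (p : ℝ) (hp0 : 1 / 2 < p) (hp1 : p < 1) :
    Filter.Tendsto
      (fun N : ℕ =>
        (dyckCostES p N -
          (2 : ℝ) ^ p * Real.Gamma (p - 1 / 2) / (4 * Real.Gamma (p + 1)) *
            (N : ℝ) ^ (1 / 2 + p)) / (N : ℝ))
      Filter.atTop
      (nhds (Real.Gamma (1 / 2 - p) * Real.Gamma (p + 1) /
        ((2 : ℝ) ^ p * Real.sqrt Real.pi * Real.Gamma (2 - p)))) :=
  dyckCostES_subleading_high_p_general (ne_neg_natCast_of_pos (by linarith))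
    (ne_neg_natCast_of_pos (by linarith)) hp1
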